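/- The reduced Burau representation of B3 with coefficients in Z_p is faithful for every p ≥ 2: if β ∈ B3 satisfies ρ3⊗Z_p(β) = Id, then β is the trivial braid. -/

import Mathlib

open LaurentPolynomial FreeGroup

/-- The defining relation of the braid group `B₃`: `σ₁σ₂σ₁ = σ₂σ₁σ₂`. -/
def B3rels : Set (FreeGroup (Fin 2)) :=
  {of 0 * of 1 * of 0 * (of 1 * of 0 * of 1)⁻¹}

/-- The braid group on three strands, `B₃ = ⟨σ₁, σ₂ ∣ σ₁σ₂σ₁ = σ₂σ₁σ₂⟩`. -/
abbrev B3 := PresentedGroup B3rels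

/-- The generator `σ₁` of `B₃`. -/
def σ₁ : B3 := PresentedGroup.of 0

/-- The generator `σ₂` of `B₃`. -/
def σ₂ : B3 := PresentedGroup.of 1

/-- `x` has the form `(a ^ 2) ^ k * (b ^ i * w * a ^ j)` with `i < 3`, `j < 2` and `w` a
product of factors `a * b` and `a * b ^ 2`. -/
def IsAmalgamNormalForm {G : Type*} [Group G] (a b x : G) : Prop :=
  ∃ (k : ℤ) (i j : ℕ) (l : List Bool), i < 3 ∧ j < 2 ∧
    x = (a ^ 2) ^ k * (b ^ i * (l.map fun s => bif s then a * b else a * b ^ 2).prod * a ^ j)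

namespace IsAmalgamNormalForm

variable {G : Type*} [Group G] {a b x : G}

lemma zpow_mul (n : ℤ) (hx : IsAmalgamNormalForm a b x) :
    IsAmalgamNormalForm a b ((a ^ 2) ^ n * x) := by
  obtain ⟨k, i, j, l, hi, hj, rfl⟩ := hx
  exact ⟨n + k, i, j, l, hi, hj, by rw [zpow_add, ← mul_assoc]⟩

lemma right_mul (h : a ^ 2 = b ^ 3) (hx : IsAmalgamNormalForm a b x) :
    IsAmalgamNormalForm a b (b * x) := by
  obtain ⟨k, i, j, l, hi, hj, rfl⟩ := hx
  have hc : Commute b ((a ^ 2) ^ k) := by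
    rw [h]; exact (Commute.self_pow b 3).zpow_right k
  rw [← mul_assoc, hc.eq, mul_assoc]
  apply zpow_mul
  obtain hi | rfl : i < 2 ∨ i = 2 := by omega
  · exact ⟨0, i + 1, j, l, by omega, hj, by simp [pow_succ', mul_assoc]⟩
  · exact ⟨1, 0, j, l, by omega, hj, by simp [h, pow_succ', mul_assoc]⟩

lemma left_mul (hx : IsAmalgamNormalForm a b x) :
    IsAmalgamNormalForm a b (a * x) := by
  obtain ⟨k, i, j, l, hi, hj, rfl⟩ := hx
  have hc : Commute a ((a ^ 2) ^ k) := (Commute.self_pow a 2).zpow_right k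
  rw [← mul_assoc, hc.eq, mul_assoc]
  apply zpow_mul
  interval_cases i
  · rcases l with _ | ⟨s, l⟩
    · interval_cases j
      · exact ⟨0, 0, 1, [], by simp⟩
      · exact ⟨1, 0, 0, [], by simp [pow_two]⟩
    · cases s
      · exact ⟨1, 2, j, l, by omega, hj, by simp [pow_two, mul_assoc]⟩
      · exact ⟨1, 1, j, l, by omega, hj, by simp [pow_two, mul_assoc]⟩
  · exact ⟨0, 0, j, true :: l, by omega, hj, by simp [mul_assoc]⟩
  · exact ⟨0, 0, j, false :: l, by omega, hj, by simp [mul_assoc]⟩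

lemma of_mem_closure (h : a ^ 2 = b ^ 3) (hx : x ∈ Subgroup.closure {a, b}) :
    IsAmalgamNormalForm a b x := by
  induction hx using Subgroup.closure_induction_left with
  | one => exact ⟨0, 0, 0, [], by simp⟩
  | mul_left y hy z _ ih =>
    rcases hy with rfl | rfl
    exacts [ih.left_mul, ih.right_mul h]
  | inv_mul_cancel y hy z _ ih =>
    rcases hy with rfl | rfl
    · have := ih.left_mul.zpow_mul (-1)
      simpa [pow_two, mul_assoc] using this
    · have := ((ih.right_mul h).right_mul h).zpow_mul (-1)
      rw [h] at this
      simpa [pow_succ', mul_assoc] using this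

end IsAmalgamNormalForm

lemma σ_braid : σ₁ * σ₂ * σ₁ = σ₂ * σ₁ * σ₂ := by
  have h : (PresentedGroup.mk B3rels)
      (of 0 * of 1 * of 0 * (of 1 * of 0 * of 1)⁻¹) = 1 :=
    PresentedGroup.one_of_mem rfl
  rw [_root_.map_mul, _root_.map_inv, mul_inv_eq_one] at h
  exact h

lemma halfTwist_sq : (σ₁ * σ₂ * σ₁) ^ 2 = (σ₁ * σ₂) ^ 3 := by
  calc (σ₁ * σ₂ * σ₁) ^ 2 = σ₁ * σ₂ * σ₁ * (σ₁ * σ₂ * σ₁) := pow_two _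
    _ = σ₁ * σ₂ * σ₁ * (σ₂ * σ₁ * σ₂) := by rw [← σ_braid]
    _ = (σ₁ * σ₂) ^ 3 := by simp only [pow_succ, pow_zero, one_mul, mul_assoc]

lemma B3.closure_halfTwist : Subgroup.closure {σ₁ * σ₂ * σ₁, σ₁ * σ₂} = ⊤ := by
  rw [eq_top_iff, ← PresentedGroup.closure_range_of B3rels, Subgroup.closure_le]
  have ha : σ₁ * σ₂ * σ₁ ∈ Subgroup.closure {σ₁ * σ₂ * σ₁, σ₁ * σ₂} :=
    Subgroup.subset_closure (by simp)
  have hb : σ₁ * σ₂ ∈ Subgroup.closure {σ₁ * σ₂ * σ₁, σ₁ * σ₂} :=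
    Subgroup.subset_closure (by simp)
  have h1 : σ₁ ∈ Subgroup.closure {σ₁ * σ₂ * σ₁, σ₁ * σ₂} := by
    simpa only [inv_mul_cancel_left] using mul_mem (inv_mem hb) ha
  have h2 : σ₂ ∈ Subgroup.closure {σ₁ * σ₂ * σ₁, σ₁ * σ₂} := by
    simpa only [inv_mul_cancel_left] using mul_mem (inv_mem h1) hb
  rintro _ ⟨i, rfl⟩
  fin_cases i
  exacts [h1, h2]

section Burau

variable {R : Type*} [CommRing R] {ρ : B3 →* Matrix (Fin 2) (Fin 2) R[T;T⁻¹]}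

lemma burau_halfTwist (h1 : ρ σ₁ = !![-T 1, 0; 1, 1]) (h2 : ρ σ₂ = !![1, T 1; 0, -T 1]) :
    ρ (σ₁ * σ₂ * σ₁) = !![0, -T 1 ^ 2; -T 1, 0] := by
  simp only [_root_.map_mul, h1, h2]
  generalize (T 1 : R[T;T⁻¹]) = t
  ext i j : 1
  fin_cases i <;> fin_cases j <;> simp [pow_two]

lemma burau_σ₁_mul_σ₂ (h1 : ρ σ₁ = !![-T 1, 0; 1, 1]) (h2 : ρ σ₂ = !![1, T 1; 0, -T 1]) :
    ρ (σ₁ * σ₂) = !![-T 1, -T 1 ^ 2; 1, 0] := by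
  simp only [_root_.map_mul, h1, h2]
  generalize (T 1 : R[T;T⁻¹]) = t
  ext i j : 1
  fin_cases i <;> fin_cases j <;> simp [pow_two]

lemma burau_fullTwist_zpow {a : B3} (ha : ρ a = !![0, -T 1 ^ 2; -T 1, 0]) (k : ℤ) :
    ρ ((a ^ 2) ^ k) = (T (3 * k) : R[T;T⁻¹]) • 1 := by
  have h : ρ (a ^ 2) = (T 3 : R[T;T⁻¹]) • 1 := by
    rw [_root_.map_pow, ha, show (3 : ℤ) = (3 : ℕ) * 1 by rfl, ← T_pow]
    generalize (T 1 : R[T;T⁻¹]) = t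
    ext i j : 1
    fin_cases i <;> fin_cases j <;> simp [pow_succ, mul_assoc]
  have h' : ρ (a ^ 2)⁻¹ = (T (-3) : R[T;T⁻¹]) • 1 := by
    have e : ρ (a ^ 2)⁻¹ * ρ (a ^ 2) = 1 := by rw [← _root_.map_mul, inv_mul_cancel, _root_.map_one]
    rw [h, mul_smul_comm, mul_one] at e
    rw [← e, smul_smul, ← T_add]
    simp
  induction k using Int.induction_on with
  | zero => simp
  | succ n ih =>
    rw [zpow_add_one, _root_.map_mul, ih, h, smul_mul_smul_comm, ← T_add, mul_one]
    ring_nf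
  | pred n ih =>
    rw [zpow_sub_one, _root_.map_mul, ih, h', smul_mul_smul_comm, ← T_add, mul_one]
    ring_nf

/-- Up to a unit, the Burau matrix of a product of factors `a * b` and `a * b ^ 2` is polynomial,
and it is congruent to `!![1, 0; *, 0]` modulo `X` unless the product is empty. -/
lemma burau_prod {a b : B3} (ha : ρ a = !![0, -T 1 ^ 2; -T 1, 0])
    (hb : ρ b = !![-T 1, -T 1 ^ 2; 1, 0]) (l : List Bool) :
    ∃ (u : R[T;T⁻¹]) (x y z w : Polynomial R), IsUnit u ∧
      ρ (l.map fun s => bif s then a * b else a * b ^ 2).prod =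
        u • !![x.toLaurent, y.toLaurent; z.toLaurent, w.toLaurent] ∧
      x.eval 0 = 1 ∧ y.eval 0 = 0 ∧ (l = [] ∨ w.eval 0 = 0) := by
  induction l with
  | nil => exact ⟨1, 1, 0, 0, 1, by simp [Matrix.one_fin_two]⟩
  | cons s l ih =>
    obtain ⟨u, x, y, z, w, hu, h, hx, hy, -⟩ := ih
    rw [List.map_cons, List.prod_cons, _root_.map_mul, h]
    cases s
    · refine ⟨T 1 ^ 3 * u, x + .X * z, y + .X * w, -.X * z, -.X * w, ((isUnit_T 1).pow 3).mul hu, ?_,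
        by simp [hx], by simp [hy], by simp⟩
      simp only [cond_false, _root_.map_mul, ha, hb, pow_two, Matrix.mul_fin_two,
        Matrix.smul_of, _root_.map_add, _root_.map_neg, Polynomial.toLaurent_X]
      generalize (T 1 : R[T;T⁻¹]) = t
      ext i j : 1
      fin_cases i <;> fin_cases j <;> simp <;> ring
    · refine ⟨-(T 1 ^ 2 * u), x, y, -x - .X * z, -y - .X * w, (((isUnit_T 1).pow 2).mul hu).neg, ?_,
        by simp [hx], by simp [hy], by simp [hy]⟩
      simp only [cond_true, _root_.map_mul, ha, hb, Matrix.mul_fin_two,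
        Matrix.smul_of, _root_.map_sub, _root_.map_neg, Polynomial.toLaurent_X]
      generalize (T 1 : R[T;T⁻¹]) = t
      ext i j : 1
      fin_cases i <;> fin_cases j <;> simp <;> ring

end Burau

/-- The reduced Burau representation of `B₃` with coefficients in `Z_p` is
faithful for every `p ≥ 2`: any homomorphism `ρ` with
`ρ(σ₁) = [[-t,0],[1,1]]` and `ρ(σ₂) = [[1,t],[0,-t]]` has trivial kernel. -/
theorem burau3_mod_p_faithful (p : ℕ) (hp : 2 ≤ p)
    (ρ : B3 →* Matrix (Fin 2) (Fin 2) (LaurentPolynomial (ZMod p)))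
    (h1 : ρ σ₁ = !![-T 1, 0; 1, 1])
    (h2 : ρ σ₂ = !![1, T 1; 0, -T 1]) :
    ∀ β : B3, ρ β = 1 → β = 1 := by
  intro β hβ
  have : Fact (1 < p) := ⟨hp⟩
  have ha := burau_halfTwist h1 h2
  have hb := burau_σ₁_mul_σ₂ h1 h2
  obtain ⟨k, i, j, l, hi, hj, rfl⟩ := IsAmalgamNormalForm.of_mem_closure (x := β) halfTwist_sq
    (by rw [B3.closure_halfTwist]; trivial)
  generalize σ₁ * σ₂ * σ₁ = a at *
  generalize σ₁ * σ₂ = b at *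
  obtain ⟨u, x, y, z, w, hu, h, hx, -, hl⟩ := burau_prod ha hb l
  have hk := burau_fullTwist_zpow ha k
  have hv : IsUnit (T (3 * k) * u : (ZMod p)[T;T⁻¹]) := (isUnit_T _).mul hu
  have ht : IsUnit (T 1 : (ZMod p)[T;T⁻¹]) := isUnit_T 1
  have hx0 : x.toLaurent ≠ 0 := by
    rw [Polynomial.toLaurent_ne_zero]
    rintro rfl
    simp at hx
  have hxX (q : Polynomial (ZMod p)) : x.toLaurent + T 1 * q.toLaurent ≠ 0 := by
    rw [← Polynomial.toLaurent_X, ← _root_.map_mul, ← _root_.map_add, Polynomial.toLaurent_ne_zero]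
    intro hq
    simpa [hx] using congrArg (Polynomial.eval 0) hq
  have hxz := hxX z
  have hxw := hxX w
  have hxw' : l ≠ [] → x.toLaurent ≠ w.toLaurent := fun hl' hxw' => by
    simpa [hx, hl.resolve_left hl'] using
      congrArg (Polynomial.eval 0) (Polynomial.toLaurent_injective hxw')
  by_cases hijl : i = 0 ∧ j = 0 ∧ l = []
  · obtain ⟨rfl, rfl, rfl⟩ := hijl
    simp only [pow_zero, List.map_nil, List.prod_nil, mul_one] at hβ ⊢
    have hT : (T (3 * k) : (ZMod p)[T;T⁻¹]) = T 0 := by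
      simpa using congrFun (congrFun (hk.symm.trans hβ) 0) 0
    obtain rfl : k = 0 := by
      have := AddMonoidAlgebra.single_left_injective one_ne_zero hT
      omega
    exact zpow_zero _
  exfalso
  rw [_root_.map_mul, hk, _root_.map_mul, _root_.map_mul, h, smul_one_mul, mul_smul_comm,
    smul_mul_assoc, smul_smul, _root_.map_pow, _root_.map_pow, ha, hb] at hβ
  clear hk
  generalize T (3 * k) * u = v at *
  generalize (T 1 : (ZMod p)[T;T⁻¹]) = t at *
  have e00 := congrFun (congrFun hβ 0) 0
  have e01 := congrFun (congrFun hβ 0) 1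
  have e10 := congrFun (congrFun hβ 1) 0
  have e11 := congrFun (congrFun hβ 1) 1
  interval_cases i <;> interval_cases j <;>
    simp [pow_two, hv.mul_right_eq_zero, -Polynomial.toLaurent_eq_zero] at e00 e01 e10 e11
  · exact hxw' (by tauto) (hv.mul_left_cancel (e00.trans e11.symm))
  · exact hx0 ((ht.mul ht).mul_left_eq_zero.1 e01)
  · exact hx0 e10
  · exact hxz ((ht.pow 3).mul_right_eq_zero.1 (by linear_combination -e01))
  · exact hxz (ht.mul_right_eq_zero.1 (by linear_combination -e10))
  · exact hxw ((hv.mul (ht.pow 4)).mul_right_eq_zero.1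
      (by linear_combination t * e11 - t * e00 - v * e01))
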